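/- arXiv:1802.01941 — 3 statements merged into one kernel-verified Lean document; each statement's English description precedes it below -/
import Mathlib

section
/- Let F be a field of characteristic different from 2, let ϖ ∈ F× be a non-square, let E = F(√ϖ), and suppose √ϖ is not a square in E; let K = E(β) with β² = √ϖ (so K = E(⁴√ϖ)). Then the quadratic form q′ on K, viewed as a 4-dimensional F-vector space, defined by q′(k) = ½·tr_{E/F}(N_{K/E}(k)), is equivalent over F to the diagonal quadratic form ⟨1, ϖ, 1, −1⟩, i.e., to the orthogonal direct sum of the binary form x² + ϖy² (the norm form of L = F(√−ϖ) when −ϖ is a non-square) and a hyperbolic plane; in particular the determinant of its Gram matrix is −ϖ times a square in F×. -/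
/-!
In the basis `1, √ϖ, β, √ϖ β` of `K`, the element with coordinates `a, b, c, d` is sent by `q′` to
`a² + ϖ b² - 2ϖ c d`: the norm is `N(x + y β) = x² - √ϖ y²`, and `½ tr` reads off the coefficient
of `1`. The substitution `c = u - v`, `-2ϖ d = u + v` turns the last term into `u² - v²`.
-/

open Module QuadraticMap

section Discriminant

variable {R n M N : Type*} [CommRing R] [Invertible (2 : R)] [Fintype n] [DecidableEq n]
  [AddCommGroup M] [Module R M] [AddCommGroup N] [Module R N]

theorem toMatrix_weightedSumSquares (w : n → R) :
    QuadraticForm.toMatrix (Pi.basisFun R n) (weightedSumSquares R w) = Matrix.diagonal w := by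
  have sq_form_single (k i j : n) :
      associated (proj (R := R) k k) (Pi.single i 1) (Pi.single j 1) =
        (Pi.single i 1 : n → R) k * (Pi.single j 1 : n → R) k := by
    simp [proj]
  ext i j
  obtain rfl | hij := eq_or_ne i j
  · simp [QuadraticForm.toMatrix, weightedSumSquares, sq_form_single, Pi.single_apply]
  · simp [QuadraticForm.toMatrix, weightedSumSquares, sq_form_single, Pi.single_apply, hij,
      hij.symm]

theorem discr_weightedSumSquares (w : n → R) :
    QuadraticForm.discr (Pi.basisFun R n) (weightedSumSquares R w) = ∏ i, w i := by
  rw [QuadraticForm.discr, toMatrix_weightedSumSquares, Matrix.det_diagonal]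

theorem toMatrix_apply_eq_polar (Q : QuadraticForm R M) (b : Basis n R M) (i j : n) :
    Q.toMatrix b i j = ⅟2 * polar Q (b i) (b j) := by
  rw [QuadraticForm.toMatrix, LinearMap.toMatrix₂_apply, associated_apply, polar,
    Module.End.smul_def, half_moduleEnd_apply_eq_half_smul, smul_eq_mul]

theorem exists_isUnit_discr_eq_discr_mul_sq {Q : QuadraticForm R M} {Q' : QuadraticForm R N}
    (h : Q.Equivalent Q') (b : Basis n R M) (b' : Basis n R N) :
    ∃ c : R, IsUnit c ∧ Q.discr b = Q'.discr b' * c ^ 2 := by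
  obtain ⟨e⟩ := h
  have comp_eq : Q'.comp (e.toLinearEquiv : M →ₗ[R] N) = Q := ext e.map_app
  refine ⟨(LinearMap.toMatrix b b' e.toLinearEquiv).det, e.toLinearEquiv.isUnit_det b b', ?_⟩
  calc Q.discr b
      = QuadraticForm.discr b (Q'.comp (e.toLinearEquiv : M →ₗ[R] N)) := by rw [comp_eq]
    _ = Q'.discr b' * (LinearMap.toMatrix b b' e.toLinearEquiv).det ^ 2 := by
      rw [QuadraticForm.discr_comp b']
      ring

end Discriminant

theorem weightedSumSquares_fin_four {R : Type*} [CommRing R] (a b c d : R) (v : Fin 4 → R) :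
    weightedSumSquares R ![a, b, c, d] v =
      a * v 0 ^ 2 + b * v 1 ^ 2 + c * v 2 ^ 2 + d * v 3 ^ 2 := by
  simp [Fin.sum_univ_four, pow_two]

section Hyperbolic

variable {R : Type*} [CommRing R] [Invertible (2 : R)]

/-- The linear change of coordinates from the `2 × 2` matrix with columns `(a, b)` and `(c, e)` to
`(a, b, u, v)` with `c = u - v` and `-2 d e = u + v`, which diagonalizes the hyperbolic form
`-2 d c e`. -/
def hyperbolicCoords (d : R) [Invertible d] : (Fin 2 × Fin 2 → R) ≃ₗ[R] (Fin 4 → R) where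
  toFun x := ![x (0, 0), x (1, 0), ⅟2 * x (0, 1) - d * x (1, 1), -(⅟2 * x (0, 1)) - d * x (1, 1)]
  invFun y p := !![y 0, y 2 - y 3; y 1, -(⅟2 * ⅟d * (y 2 + y 3))] p.1 p.2
  map_add' x y := by
    ext i
    fin_cases i <;> simp <;> ring
  map_smul' r x := by
    ext i
    fin_cases i <;> simp <;> ring
  left_inv x := by
    have sub_uv :
        (⅟2 * x (0, 1) - d * x (1, 1)) - (-(⅟2 * x (0, 1)) - d * x (1, 1)) = x (0, 1) := by
      linear_combination x (0, 1) * mul_invOf_self (2 : R)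
    have add_uv : -(⅟2 * ⅟d *
        ((⅟2 * x (0, 1) - d * x (1, 1)) + (-(⅟2 * x (0, 1)) - d * x (1, 1)))) = x (1, 1) := by
      linear_combination x (1, 1) * (mul_invOf_self (2 : R) + 2 * ⅟2 * mul_invOf_self d)
    ext ⟨i, j⟩
    fin_cases i <;> fin_cases j
    exacts [rfl, sub_uv, rfl, add_uv]
  right_inv y := by
    have half_sub : ⅟2 * (y 2 - y 3) - d * -(⅟2 * ⅟d * (y 2 + y 3)) = y 2 := by
      linear_combination y 2 * mul_invOf_self (2 : R) + ⅟2 * (y 2 + y 3) * mul_invOf_self d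
    have neg_half_sub : -(⅟2 * (y 2 - y 3)) - d * -(⅟2 * ⅟d * (y 2 + y 3)) = y 3 := by
      linear_combination y 3 * mul_invOf_self (2 : R) + ⅟2 * (y 2 + y 3) * mul_invOf_self d
    ext i
    fin_cases i
    exacts [rfl, rfl, half_sub, neg_half_sub]

theorem weightedSumSquares_hyperbolicCoords (d : R) [Invertible d] (x : Fin 2 × Fin 2 → R) :
    weightedSumSquares R ![1, d, 1, -1] (hyperbolicCoords d x) =
      x (0, 0) ^ 2 + d * x (1, 0) ^ 2 - 2 * d * x (0, 1) * x (1, 1) :=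
  calc weightedSumSquares R ![1, d, 1, -1] (hyperbolicCoords d x)
      = 1 * x (0, 0) ^ 2 + d * x (1, 0) ^ 2 + 1 * (⅟2 * x (0, 1) - d * x (1, 1)) ^ 2 +
          -1 * (-(⅟2 * x (0, 1)) - d * x (1, 1)) ^ 2 := weightedSumSquares_fin_four ..
    _ = x (0, 0) ^ 2 + d * x (1, 0) ^ 2 - 2 * d * x (0, 1) * x (1, 1) := by
      linear_combination -2 * d * x (0, 1) * x (1, 1) * mul_invOf_self (2 : R)

end Hyperbolic

/-- The basis `B` of the `R`-algebra `S` has the shape `1, √d`, so that `S = R[√d]`. -/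
structure IsSqrtBasis {R S : Type*} [CommRing R] [CommRing S] [Algebra R S]
    (B : Basis (Fin 2) R S) (d : R) : Prop where
  apply_zero : B 0 = 1
  sq_apply_one : B 1 ^ 2 = algebraMap R S d

theorem exists_isSqrtBasis_of_forall_sq_ne {F E : Type*} [Field F] [CommRing E] [Nontrivial E]
    [Algebra F E] {d : F} {s : E} (hd : ∀ a : F, a ^ 2 ≠ d) (hs : s ^ 2 = algebraMap F E d)
    (hgen : ∀ x : E, ∃ a b : F, x = algebraMap F E a + algebraMap F E b * s) :
    ∃ B : Basis (Fin 2) F E, IsSqrtBasis B d ∧ B 1 = s := by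
  have not_scalar (a : F) : algebraMap F E a ≠ s := by
    rintro rfl
    rw [← map_pow] at hs
    exact hd a ((algebraMap F E).injective hs)
  have linearIndependent : LinearIndependent F ![(1 : E), s] :=
    (LinearIndependent.pair_iff' one_ne_zero).2 fun a => by
      simpa only [Algebra.smul_def, mul_one] using not_scalar a
  have span : ⊤ ≤ Submodule.span F (Set.range ![(1 : E), s]) := by
    rintro x -
    obtain ⟨a, b, rfl⟩ := hgen x
    rw [Matrix.range_cons_cons_empty, Submodule.mem_span_pair]
    exact ⟨a, b, by simp only [Algebra.smul_def, mul_one]⟩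
  exact ⟨Basis.mk linearIndependent span, ⟨by simp, by simpa using hs⟩, by simp⟩

namespace IsSqrtBasis

section Coordinates

variable {R S : Type*} [CommRing R] [CommRing S] [Algebra R S]
  {B : Basis (Fin 2) R S} {d : R}

theorem mul_apply_one (hB : IsSqrtBasis B d) (x : S) :
    x * B 1 = (d * B.repr x 1) • B 0 + B.repr x 0 • B 1 := by
  conv_lhs => rw [← B.sum_repr x, Fin.sum_univ_two, hB.apply_zero]
  rw [hB.apply_zero]
  simp only [Algebra.smul_def, map_mul, ← hB.sq_apply_one]
  ring

theorem leftMulMatrix_eq (hB : IsSqrtBasis B d) (x : S) :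
    Algebra.leftMulMatrix B x = !![B.repr x 0, d * B.repr x 1; B.repr x 1, B.repr x 0] := by
  ext i j
  rw [Algebra.leftMulMatrix_eq_repr_mul]
  fin_cases j
  · fin_cases i <;> simp [hB.apply_zero]
  · fin_cases i <;> simp [hB.mul_apply_one]

theorem trace_eq (hB : IsSqrtBasis B d) (x : S) : Algebra.trace R S x = 2 * B.repr x 0 := by
  rw [Algebra.trace_eq_matrix_trace B, hB.leftMulMatrix_eq, Matrix.trace_fin_two_of, two_mul]

theorem norm_eq (hB : IsSqrtBasis B d) (x : S) :
    Algebra.norm R x = B.repr x 0 ^ 2 - d * B.repr x 1 ^ 2 := by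
  rw [Algebra.norm_eq_matrix_det B, hB.leftMulMatrix_eq, Matrix.det_fin_two_of]
  ring

theorem repr_mul_zero (hB : IsSqrtBasis B d) (x y : S) :
    B.repr (x * y) 0 = B.repr x 0 * B.repr y 0 + d * B.repr x 1 * B.repr y 1 := by
  rw [← Algebra.leftMulMatrix_mulVec_repr B x y, hB.leftMulMatrix_eq]
  simp [Matrix.mulVec, dotProduct, Fin.sum_univ_two]

theorem repr_mul_one (hB : IsSqrtBasis B d) (x y : S) :
    B.repr (x * y) 1 = B.repr x 1 * B.repr y 0 + B.repr x 0 * B.repr y 1 := by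
  rw [← Algebra.leftMulMatrix_mulVec_repr B x y, hB.leftMulMatrix_eq]
  simp [Matrix.mulVec, dotProduct, Fin.sum_univ_two]

/-- The norm of a quadratic algebra `S = R[√d]`, as a quadratic form over `R` whose underlying
function is `Algebra.norm R` by definition. -/
noncomputable def normForm (hB : IsSqrtBasis B d) : QuadraticForm R S :=
  ((weightedSumSquares R ![1, -d]).comp (B.equivFun : S →ₗ[R] Fin 2 → R)).copy
    (Algebra.norm R) (by
      ext x
      simp [hB.norm_eq, Fin.sum_univ_two, pow_two, sub_eq_add_neg])

end Coordinates

section Tower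

variable {R S T : Type*} [CommRing R] [CommRing S] [CommRing T]
  [Algebra R S] [Algebra S T] [Algebra R T] [IsScalarTower R S T] [Invertible (2 : R)]
  {B : Basis (Fin 2) R S} {C : Basis (Fin 2) S T} {d : R} {e : S}

variable (R) in
/-- The form `k ↦ ½ · tr_{S/R}(N_{T/S}(k))` on `T = S[√e]`, the `q′` of the theorem. -/
noncomputable def traceNormForm (hC : IsSqrtBasis C e) : QuadraticForm R T :=
  ⅟(2 : R) • (Algebra.trace R S).compQuadraticMap' hC.normForm

theorem traceNormForm_apply (hC : IsSqrtBasis C e) (k : T) :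
    hC.traceNormForm R k = ⅟2 * Algebra.trace R S (Algebra.norm S k) :=
  rfl

theorem traceNormForm_eq_repr (hB : IsSqrtBasis B d) (hC : IsSqrtBasis C (B 1)) (k : T) :
    hC.traceNormForm R k = B.repr (C.repr k 0) 0 ^ 2 + d * B.repr (C.repr k 0) 1 ^ 2 -
      2 * d * B.repr (C.repr k 1) 0 * B.repr (C.repr k 1) 1 := by
  calc hC.traceNormForm R k
      = B.repr (C.repr k 0 ^ 2 - B 1 * C.repr k 1 ^ 2) 0 := by
        rw [traceNormForm_apply, hB.trace_eq, hC.norm_eq, invOf_mul_cancel_left']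
    _ = B.repr (C.repr k 0 * C.repr k 0) 0 - d * B.repr (C.repr k 1 * C.repr k 1) 1 := by
        simp [pow_two, hB.repr_mul_zero (B 1)]
    _ = B.repr (C.repr k 0) 0 ^ 2 + d * B.repr (C.repr k 0) 1 ^ 2 -
          2 * d * B.repr (C.repr k 1) 0 * B.repr (C.repr k 1) 1 := by
        rw [hB.repr_mul_zero, hB.repr_mul_one]
        ring

theorem traceNormForm_equivalent [Invertible d] (hB : IsSqrtBasis B d) (hC : IsSqrtBasis C (B 1)) :
    (hC.traceNormForm R).Equivalent (weightedSumSquares R ![1, d, 1, -1]) := by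
  refine ⟨⟨(B.smulTower C).equivFun ≪≫ₗ hyperbolicCoords d, fun k => ?_⟩⟩
  calc weightedSumSquares R ![1, d, 1, -1] (hyperbolicCoords d ((B.smulTower C).equivFun k))
      = _ := weightedSumSquares_hyperbolicCoords d _
    _ = hC.traceNormForm R k := by
      simp only [Basis.equivFun_apply, Basis.smulTower_repr_mk, hB.traceNormForm_eq_repr hC]

end Tower

end IsSqrtBasis

theorem stmt4_general {R S T : Type*} [CommRing R] [CommRing S] [CommRing T]
    [Algebra R S] [Algebra S T] [Algebra R T] [IsScalarTower R S T]
    [Invertible (2 : R)] {ϖ : R} [Invertible ϖ]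
    {B : Basis (Fin 2) R S} (hB : IsSqrtBasis B ϖ)
    {C : Basis (Fin 2) S T} (hC : IsSqrtBasis C (B 1))
    (q : T → R) (hq : ∀ k : T, q k = ⅟2 * Algebra.trace R S (Algebra.norm S k)) :
    (∃ ℓ : (Fin 4 → R) ≃ₗ[R] T, ∀ v : Fin 4 → R,
        q (ℓ v) = 1 * v 0 ^ 2 + ϖ * v 1 ^ 2 + 1 * v 2 ^ 2 + (-1) * v 3 ^ 2) ∧
    (∀ b : Basis (Fin 4) R T, ∃ c : R, IsUnit c ∧
        (Matrix.of fun i j : Fin 4 => ⅟2 * (q (b i + b j) - q (b i) - q (b j))).det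
          = -ϖ * c ^ 2) := by
  obtain rfl : q = hC.traceNormForm R := funext hq
  have equivalent := hB.traceNormForm_equivalent hC
  refine ⟨?_, fun b => ?_⟩
  · obtain ⟨e⟩ := equivalent
    refine ⟨e.symm.toLinearEquiv, fun v => ?_⟩
    exact (e.symm.map_app v).trans (weightedSumSquares_fin_four ..)
  · obtain ⟨c, hc, discr_eq⟩ :=
      exists_isUnit_discr_eq_discr_mul_sq equivalent b (Pi.basisFun R (Fin 4))
    refine ⟨c, hc, ?_⟩
    calc _ = (hC.traceNormForm R).discr b :=
          congrArg Matrix.det (Matrix.ext fun i j => (toMatrix_apply_eq_polar _ b i j).symm)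
      _ = -ϖ * c ^ 2 := by
          simp [discr_eq, discr_weightedSumSquares, Fin.prod_univ_four]

/-- for `E = F(√ϖ)` (`ϖ` a non-square, char F ≠ 2) and `K = E(⁴√ϖ)`
(i.e. `K = E(β)` with `β² = √ϖ`, where `√ϖ` is not a square in `E`), the quadratic
form `q′(k) = ½·tr_{E/F}(N_{K/E}(k))` on the 4-dimensional `F`-vector space `K` is
equivalent to `⟨1, ϖ, 1, −1⟩`, the orthogonal sum of `x² + ϖy²` and a hyperbolic
plane; in particular its Gram determinant with respect to any `F`-basis is `−ϖ`
times a nonzero square. -/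
theorem stmt4 {F E K : Type*} [Field F] [Field E] [Field K]
    [Algebra F E] [Algebra E K] [Algebra F K] [IsScalarTower F E K]
    [FiniteDimensional F E] [FiniteDimensional E K]
    (hchar : (2 : F) ≠ 0)
    (ϖ : F) (hϖ : ¬ ∃ a : F, a ^ 2 = ϖ)
    (sqrtϖ : E) (hsqrtϖ : sqrtϖ ^ 2 = algebraMap F E ϖ)
    (hEgen : ∀ x : E, ∃ a b : F, x = algebraMap F E a + algebraMap F E b * sqrtϖ)
    (hns : ¬ ∃ y : E, y ^ 2 = sqrtϖ)
    (β : K) (hβ : β ^ 2 = algebraMap E K sqrtϖ)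
    (hKgen : ∀ x : K, ∃ a b : E, x = algebraMap E K a + algebraMap E K b * β)
    (q : K → F)
    (hq : ∀ k : K, q k = 1 / 2 * Algebra.trace F E (Algebra.norm E k)) :
    (∃ ℓ : (Fin 4 → F) ≃ₗ[F] K, ∀ v : Fin 4 → F,
        q (ℓ v) = 1 * v 0 ^ 2 + ϖ * v 1 ^ 2 + 1 * v 2 ^ 2 + (-1) * v 3 ^ 2) ∧
    (∀ b : Module.Basis (Fin 4) F K, ∃ c : F, c ≠ 0 ∧
        (Matrix.of fun i j : Fin 4 => (q (b i + b j) - q (b i) - q (b j)) / 2).det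
          = -ϖ * c ^ 2) := by
  let := invertibleOfNonzero hchar
  let : Invertible ϖ := invertibleOfNonzero fun h => hϖ ⟨0, by simp [h]⟩
  obtain ⟨B, hB, rfl⟩ := exists_isSqrtBasis_of_forall_sq_ne (not_exists.1 hϖ) hsqrtϖ hEgen
  obtain ⟨C, hC, -⟩ := exists_isSqrtBasis_of_forall_sq_ne (not_exists.1 hns) hβ hKgen
  simpa [div_eq_inv_mul] using stmt4_general hB hC q (by simpa using hq)
end

section
/- Let F be a field of characteristic different from 2, let u ∈ F× be a non-square, and let E = F(√u). Let u′ = c + d√u ∈ E× with c, d ∈ F and d ≠ 0 (so u′ ∉ F), and suppose u′ is not a square in E; let K = E(√u′). Then, with respect to the F-basis (1, √u, √u′, √u·√u′) of K, the Gram matrix of the symmetric bilinear form associated to the quadratic form q′(k) = ½·tr_{E/F}(N_{K/E}(k)) has determinant equal to u²·N_{E/F}(u′) = u²·(c² − u d²); in particular, the discriminant of q′ equals N_{E/F}(u′) modulo squares in F×. -/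
/-!
Scharlau transfer: the norm form of `K = E(√u′)` over `E` is `⟨1, -u′⟩`, so `q′` is the orthogonal
sum of the two forms `½·tr_{E/F}(a·x²)` on `E` with `a = 1` and `a = -u′`. Multiplication by `a`
scales the Gram determinant of the trace form by `N_{E/F}(a)`, and the trace form of
`E = F(√u)` has determinant `4u` in the basis `(1, √u)`. Hence the two blocks have determinants
`u` and `u·N_{E/F}(-u′)`.
-/

open Module Matrix

section RankTwo

variable {R S : Type*} [CommRing R] [CommRing S] [Algebra R S]

theorem norm_add_eq_add_trace (b : Basis (Fin 2) R S) (x y : S) :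
    Algebra.norm R (x + y) = Algebra.norm R x + Algebra.norm R y +
      (Algebra.trace R S x * Algebra.trace R S y - Algebra.trace R S (x * y)) := by
  simp only [Algebra.norm_eq_matrix_det b, Algebra.trace_eq_matrix_trace b, map_add, map_mul,
    det_fin_two, trace_fin_two, Matrix.add_apply, mul_apply, Fin.sum_univ_two]
  ring

/-- The norm of an algebra that is free of rank two, as a quadratic form. The basis only witnesses
the rank: the form does not depend on it. -/
noncomputable def normForm (b : Basis (Fin 2) R S) : QuadraticForm R S where
  toFun := Algebra.norm R
  toFun_smul a x := by
    rw [Algebra.smul_def, map_mul, Algebra.norm_algebraMap_of_basis b, Fintype.card_fin, sq,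
      smul_eq_mul]
  exists_companion' :=
    ⟨(LinearMap.mul R R).compl₁₂ (Algebra.trace R S) (Algebra.trace R S) - Algebra.traceForm R S,
      fun x y => by simp [norm_add_eq_add_trace b x y]⟩

theorem polar_normForm (b : Basis (Fin 2) R S) (x y : S) :
    QuadraticMap.polar (normForm b) x y =
      Algebra.trace R S x * Algebra.trace R S y - Algebra.trace R S (x * y) := by
  change Algebra.norm R (x + y) - Algebra.norm R x - Algebra.norm R y = _
  rw [norm_add_eq_add_trace b]
  ring

end RankTwo

section AdjoinSqrt

variable {R S : Type*} [CommRing R] [CommRing S] [Algebra R S] {t : R} {s : S}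
  (hs : s ^ 2 = algebraMap R S t) {b : Basis (Fin 2) R S} (hb : ⇑b = ![1, s])

include hs hb

theorem leftMulMatrix_add_mul_sqrt (x y : R) :
    Algebra.leftMulMatrix b (algebraMap R S x + algebraMap R S y * s) = !![x, t * y; y, x] := by
  have hb0 : b 0 = 1 := congrFun hb 0
  have hb1 : b 1 = s := congrFun hb 1
  have mul_b0 : (algebraMap R S x + algebraMap R S y * s) * b 0 = x • b 0 + y • b 1 := by
    simp only [hb0, hb1, Algebra.smul_def, mul_one]
  have mul_b1 : (algebraMap R S x + algebraMap R S y * s) * b 1 = (t * y) • b 0 + x • b 1 := by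
    simp only [hb0, hb1, Algebra.smul_def, map_mul]
    linear_combination algebraMap R S y * hs
  ext i j
  rw [Algebra.leftMulMatrix_eq_repr_mul]
  fin_cases j <;> fin_cases i <;> simp [mul_b0, mul_b1]

theorem trace_add_mul_sqrt (x y : R) :
    Algebra.trace R S (algebraMap R S x + algebraMap R S y * s) = 2 * x := by
  rw [Algebra.trace_eq_matrix_trace b, leftMulMatrix_add_mul_sqrt hs hb, trace_fin_two_of, two_mul]

theorem norm_add_mul_sqrt (x y : R) :
    Algebra.norm R (algebraMap R S x + algebraMap R S y * s) = x ^ 2 - t * y ^ 2 := by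
  rw [Algebra.norm_eq_matrix_det b, leftMulMatrix_add_mul_sqrt hs hb, det_fin_two_of]
  ring

theorem trace_algebraMap_mul_sqrt (y : R) : Algebra.trace R S (algebraMap R S y * s) = 0 := by
  simpa using trace_add_mul_sqrt hs hb 0 y

theorem trace_algebraMap_eq_two_mul (x : R) : Algebra.trace R S (algebraMap R S x) = 2 * x := by
  simpa using trace_add_mul_sqrt hs hb x 0

theorem discr_one_sqrt : Algebra.discr R b = 4 * t := by
  have trace_one : Algebra.trace R S 1 = 2 := by
    simpa using trace_algebraMap_eq_two_mul hs hb 1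
  have trace_s : Algebra.trace R S s = 0 := by
    simpa using trace_algebraMap_mul_sqrt hs hb 1
  have trace_s_mul_s : Algebra.trace R S (s * s) = 2 * t := by
    rw [← sq, hs, trace_algebraMap_eq_two_mul hs hb]
  simp only [Algebra.discr_def, det_fin_two, Algebra.traceMatrix_apply, Algebra.traceForm_apply,
    hb, cons_val_zero, cons_val_one, mul_one, one_mul, trace_one, trace_s, trace_s_mul_s]
  ring

theorem polar_normForm_smul_basis (x y : R) (i j : Fin 2) :
    QuadraticMap.polar (normForm b) (x • b i) (y • b j) =
      if i = j then 2 * (![1, -t] i * x * y) else 0 := by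
  have polar_one_one : QuadraticMap.polar (normForm b) (algebraMap R S x) (algebraMap R S y) =
      2 * (x * y) := by
    simp only [polar_normForm, ← map_mul, trace_algebraMap_eq_two_mul hs hb]
    ring
  have polar_one_s (z w : R) :
      QuadraticMap.polar (normForm b) (algebraMap R S z) (algebraMap R S w * s) = 0 := by
    rw [polar_normForm, ← mul_assoc, ← map_mul (algebraMap R S), trace_algebraMap_mul_sqrt hs hb,
      trace_algebraMap_mul_sqrt hs hb, mul_zero, sub_zero]
  have polar_s_s : QuadraticMap.polar (normForm b) (algebraMap R S x * s) (algebraMap R S y * s) =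
      2 * (-t * x * y) := by
    rw [polar_normForm, mul_mul_mul_comm, ← sq s, hs,
      ← map_mul (algebraMap R S), ← map_mul (algebraMap R S), trace_algebraMap_mul_sqrt hs hb,
      trace_algebraMap_eq_two_mul hs hb]
    ring
  have polar_s_one :
      QuadraticMap.polar (normForm b) (algebraMap R S x * s) (algebraMap R S y) = 0 := by
    rw [QuadraticMap.polar_comm, polar_one_s]
  fin_cases i <;> fin_cases j <;>
    simp [hb, Algebra.smul_def, polar_one_one, polar_one_s, polar_s_one, polar_s_s]

end AdjoinSqrt

section ScaledTraceForm

variable {R S ι : Type*} [CommRing R] [CommRing S] [Algebra R S] [Fintype ι] [DecidableEq ι]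

variable (R) in
/-- The scaled trace form `(x, y) ↦ tr (a * x * y)`, the transfer to `R` of the one-dimensional
bilinear form `⟨a⟩` over `S`. -/
noncomputable def scaledTraceForm (a : S) : LinearMap.BilinForm R S :=
  (Algebra.traceForm R S).compLeft (LinearMap.mulLeft R a)

theorem scaledTraceForm_apply (a x y : S) :
    scaledTraceForm R a x y = Algebra.trace R S (a * x * y) :=
  rfl

theorem det_toMatrix_scaledTraceForm (b : Basis ι R S) (a : S) :
    (LinearMap.BilinForm.toMatrix b (scaledTraceForm R a)).det =
      Algebra.norm R a * Algebra.discr R b := by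
  rw [scaledTraceForm, LinearMap.BilinForm.toMatrix_compLeft, det_mul, det_transpose,
    LinearMap.det_toMatrix, Algebra.discr_def, Algebra.traceMatrix_of_basis]
  rfl

end ScaledTraceForm

theorem associated_eq_invOf_two_mul {R M : Type*} [CommRing R] [AddCommGroup M] [Module R M]
    [Invertible (2 : R)] (Q : QuadraticForm R M) (x y : M) :
    QuadraticMap.associated Q x y = ⅟2 * (Q (x + y) - Q x - Q y) := by
  rw [QuadraticMap.associated_apply, Module.End.smul_def,
    QuadraticMap.half_moduleEnd_apply_eq_half_smul, smul_eq_mul]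

section HalfTraceNormForm

variable {R S A ι : Type*} [CommRing R] [CommRing S] [CommRing A] [Algebra R S] [Algebra S A]
  [Algebra R A] [IsScalarTower R S A] [Invertible (2 : R)]

variable (R) in
/-- The quadratic form `q′ = ½·tr_{S/R} ∘ N_{A/S}` over `R` on an algebra `A` that is free of rank
two over `S`. -/
noncomputable def halfTraceNormForm (c : Basis (Fin 2) S A) : QuadraticForm R A :=
  (⅟2 : R) • (Algebra.trace R S).compQuadraticMap' (normForm c)

theorem halfTraceNormForm_apply (c : Basis (Fin 2) S A) (k : A) :
    halfTraceNormForm R c k = ⅟2 * Algebra.trace R S (Algebra.norm S k) :=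
  rfl

theorem associated_halfTraceNormForm (c : Basis (Fin 2) S A) (x y : A) :
    QuadraticMap.associated (halfTraceNormForm R c) x y =
      ⅟2 * (⅟2 * Algebra.trace R S (QuadraticMap.polar (normForm c) x y)) := by
  simp only [associated_eq_invOf_two_mul, halfTraceNormForm_apply, ← mul_sub, ← map_sub]
  rfl

variable {t : S} {s : A} (hs : s ^ 2 = algebraMap S A t) {c : Basis (Fin 2) S A}
  (hc : ⇑c = ![1, s]) [Fintype ι] [DecidableEq ι] (b : Basis ι R S)

include hs hc

theorem toMatrix_associated_halfTraceNormForm :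
    LinearMap.BilinForm.toMatrix (b.smulTower c) (QuadraticMap.associated (halfTraceNormForm R c)) =
      blockDiagonal fun k =>
        (⅟2 : R) • LinearMap.BilinForm.toMatrix b (scaledTraceForm R (![1, -t] k)) := by
  ext ⟨i, k⟩ ⟨j, l⟩
  rw [LinearMap.BilinForm.toMatrix_apply, Basis.smulTower_apply, Basis.smulTower_apply,
    associated_halfTraceNormForm, polar_normForm_smul_basis hs hc, blockDiagonal_apply]
  split_ifs with hkl
  · rw [two_mul, map_add, ← two_mul, invOf_mul_cancel_left, Matrix.smul_apply,
      LinearMap.BilinForm.toMatrix_apply, scaledTraceForm_apply, smul_eq_mul]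
  · simp

theorem det_toMatrix_associated_halfTraceNormForm :
    (LinearMap.BilinForm.toMatrix (b.smulTower c)
      (QuadraticMap.associated (halfTraceNormForm R c))).det =
      (⅟2 ^ Fintype.card ι * Algebra.discr R b) ^ 2 * Algebra.norm R (-t) := by
  rw [toMatrix_associated_halfTraceNormForm hs hc, det_blockDiagonal]
  simp only [Fin.prod_univ_two, det_smul, det_toMatrix_scaledTraceForm, cons_val_zero,
    cons_val_one, map_one]
  ring

end HalfTraceNormForm

section ChangeOfBasis

variable {R M ι κ : Type*} [CommRing R] [AddCommGroup M] [Module R M] [Fintype ι] [DecidableEq ι]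
  [Fintype κ] [DecidableEq κ]

theorem det_toMatrix_reindex (b : Basis ι R M) (e : ι ≃ κ) (B : LinearMap.BilinForm R M) :
    (LinearMap.BilinForm.toMatrix (b.reindex e) B).det =
      (LinearMap.BilinForm.toMatrix b B).det := by
  rw [← det_submatrix_equiv_self e]
  congr 1
  ext i j
  simp [LinearMap.BilinForm.toMatrix_apply]

theorem det_toMatrix_eq_mul_det_sq (b b' : Basis ι R M) (B : LinearMap.BilinForm R M) :
    (LinearMap.BilinForm.toMatrix b' B).det =
      (LinearMap.BilinForm.toMatrix b B).det * b.det b' ^ 2 := by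
  rw [← LinearMap.BilinForm.toMatrix_mul_basis_toMatrix b b' B, det_mul, det_mul, det_transpose,
    Basis.det_apply]
  ring

end ChangeOfBasis

theorem exists_basis_one_sqrt {F E : Type*} [Field F] [CommRing E] [Nontrivial E] [Algebra F E]
    {t : F} (ht : ¬IsSquare t) {s : E} (hs : s ^ 2 = algebraMap F E t)
    (hgen : ∀ x : E, ∃ a b : F, x = algebraMap F E a + algebraMap F E b * s) :
    ∃ b : Basis (Fin 2) F E, ⇑b = ![1, s] := by
  have linearIndependent : LinearIndependent F ![1, s] := by
    refine (LinearIndependent.pair_iff' one_ne_zero).2 fun a has =>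
      ht ((isSquare_iff_exists_sq t).2 ⟨a, ?_⟩)
    apply (algebraMap F E).injective
    rw [map_pow, Algebra.algebraMap_eq_smul_one a, has, hs]
  have span_eq_top : ⊤ ≤ Submodule.span F (Set.range ![1, s]) := by
    rintro x -
    obtain ⟨a, b, rfl⟩ := hgen x
    rw [range_cons_cons_empty, Submodule.mem_span_pair]
    exact ⟨a, b, by simp only [Algebra.smul_def, mul_one]⟩
  exact ⟨Basis.mk linearIndependent span_eq_top, Basis.coe_mk _ _⟩

section QuarticTower

variable {F E K : Type*} [CommRing F] [CommRing E] [CommRing K] [Algebra F E] [Algebra E K]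
  [Algebra F K] [IsScalarTower F E K]

/-- The basis `(1, √u, √u′, √u·√u′)` of a tower `F(√u)(√u′)`, from bases `(1, √u)` and `(1, √u′)`
of its two steps; the product of `bE i` and `bK j` has index `i + 2 * j`. -/
noncomputable def quarticBasis (bE : Basis (Fin 2) F E) (bK : Basis (Fin 2) E K) :
    Basis (Fin 4) F K :=
  (bE.smulTower bK).reindex ((Equiv.prodComm _ _).trans finProdFinEquiv)

variable {bE : Basis (Fin 2) F E} {bK : Basis (Fin 2) E K} {sqrtu : E} {sqrtu' : K}

theorem coe_quarticBasis (hbE : ⇑bE = ![1, sqrtu]) (hbK : ⇑bK = ![1, sqrtu']) :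
    ⇑(quarticBasis bE bK) =
      ![1, algebraMap E K sqrtu, sqrtu', algebraMap E K sqrtu * sqrtu'] := by
  ext i
  fin_cases i <;>
    simp [quarticBasis, Basis.smulTower_apply, finProdFinEquiv, Fin.divNat, Fin.modNat, hbE, hbK,
      Algebra.smul_def]

theorem det_toMatrix_quarticBasis [Invertible (2 : F)] {u : F} {u' : E}
    (hsqrtu : sqrtu ^ 2 = algebraMap F E u) (hbE : ⇑bE = ![1, sqrtu])
    (hsqrtu' : sqrtu' ^ 2 = algebraMap E K u') (hbK : ⇑bK = ![1, sqrtu']) :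
    (LinearMap.BilinForm.toMatrix (quarticBasis bE bK)
      (QuadraticMap.associated (halfTraceNormForm F bK))).det =
      u ^ 2 * Algebra.norm F (-u') := by
  have half_sq_mul_four : (⅟2 : F) ^ 2 * (4 * u) = u := by
    linear_combination (⅟2 * 2 + 1) * u * invOf_mul_self (2 : F)
  rw [quarticBasis, det_toMatrix_reindex, det_toMatrix_associated_halfTraceNormForm hsqrtu' hbK,
    discr_one_sqrt hsqrtu hbE, Fintype.card_fin, half_sq_mul_four]

end QuarticTower

theorem stmt7_general {F E K : Type*} [CommRing F] [CommRing E] [CommRing K]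
    [Algebra F E] [Algebra E K] [Algebra F K] [IsScalarTower F E K] [Invertible (2 : F)]
    {u : F} (hu : IsUnit u) {sqrtu : E} (hsqrtu : sqrtu ^ 2 = algebraMap F E u)
    {bE : Basis (Fin 2) F E} (hbE : ⇑bE = ![1, sqrtu])
    {c d : F} {u' : E} (hu' : u' = algebraMap F E c + algebraMap F E d * sqrtu)
    {sqrtu' : K} (hsqrtu' : sqrtu' ^ 2 = algebraMap E K u')
    {bK : Basis (Fin 2) E K} (hbK : ⇑bK = ![1, sqrtu'])
    {q : K → F} (hq : ∀ k, q k = ⅟2 * Algebra.trace F E (Algebra.norm E k))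
    {B : K → K → F} (hB : ∀ x y, B x y = ⅟2 * (q (x + y) - q x - q y)) :
    (Matrix.of fun i j : Fin 4 =>
        B (![1, algebraMap E K sqrtu, sqrtu', algebraMap E K sqrtu * sqrtu'] i)
          (![1, algebraMap E K sqrtu, sqrtu', algebraMap E K sqrtu * sqrtu'] j)).det
      = u ^ 2 * (c ^ 2 - u * d ^ 2) ∧
    ∀ bs : Basis (Fin 4) F K, ∃ r : F, IsUnit r ∧
      (Matrix.of fun i j : Fin 4 => B (bs i) (bs j)).det = (c ^ 2 - u * d ^ 2) * r ^ 2 := by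
  have gram_eq (bs : Basis (Fin 4) F K) : (Matrix.of fun i j => B (bs i) (bs j)) =
      LinearMap.BilinForm.toMatrix bs (QuadraticMap.associated (halfTraceNormForm F bK)) := by
    ext i j
    simp only [of_apply, LinearMap.BilinForm.toMatrix_apply, associated_eq_invOf_two_mul,
      halfTraceNormForm_apply, hB, hq]
  have norm_neg_u' : Algebra.norm F (-u') = c ^ 2 - u * d ^ 2 := by
    simpa [hu', neg_add_rev, add_comm] using norm_add_mul_sqrt hsqrtu hbE (-c) (-d)
  have det_quartic := det_toMatrix_quarticBasis hsqrtu hbE hsqrtu' hbK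
  rw [norm_neg_u'] at det_quartic
  refine ⟨?_, fun bs => ⟨u * (quarticBasis bE bK).det bs, hu.mul (Basis.isUnit_det _ bs), ?_⟩⟩
  · rw [← coe_quarticBasis hbE hbK, gram_eq, det_quartic]
  · rw [gram_eq, det_toMatrix_eq_mul_det_sq (quarticBasis bE bK), det_quartic]
    ring

/-- for `E = F(√u)` (`u` a non-square, char F ≠ 2),
`u′ = c + d√u ∈ E` with `d ≠ 0` not a square in `E`, and `K = E(√u′)`, the Gram
matrix of `q′(k) = ½·tr_{E/F}(N_{K/E}(k))` with respect to the `F`-basis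
`(1, √u, √u′, √u·√u′)` of `K` has determinant `u²·N_{E/F}(u′) = u²·(c² − u·d²)`;
in particular the discriminant of `q′` is `N_{E/F}(u′)` modulo squares. -/
theorem stmt7 {F E K : Type*} [Field F] [Field E] [Field K]
    [Algebra F E] [Algebra E K] [Algebra F K] [IsScalarTower F E K]
    [FiniteDimensional F E] [FiniteDimensional E K]
    (hchar : (2 : F) ≠ 0)
    (u : F) (hu : ¬ ∃ a : F, a ^ 2 = u)
    (sqrtu : E) (hsqrtu : sqrtu ^ 2 = algebraMap F E u)
    (hEgen : ∀ x : E, ∃ a b : F, x = algebraMap F E a + algebraMap F E b * sqrtu)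
    (c d : F) (hd : d ≠ 0)
    (u' : E) (hu' : u' = algebraMap F E c + algebraMap F E d * sqrtu)
    (hns : ¬ ∃ y : E, y ^ 2 = u')
    (sqrtu' : K) (hsqrtu' : sqrtu' ^ 2 = algebraMap E K u')
    (hKgen : ∀ x : K, ∃ a b : E, x = algebraMap E K a + algebraMap E K b * sqrtu')
    (q : K → F)
    (hq : ∀ k : K, q k = 1 / 2 * Algebra.trace F E (Algebra.norm E k))
    (B : K → K → F)
    (hB : ∀ x y : K, B x y = (q (x + y) - q x - q y) / 2) :
    (Matrix.of fun i j : Fin 4 =>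
        B (![1, algebraMap E K sqrtu, sqrtu', algebraMap E K sqrtu * sqrtu'] i)
          (![1, algebraMap E K sqrtu, sqrtu', algebraMap E K sqrtu * sqrtu'] j)).det
      = u ^ 2 * (c ^ 2 - u * d ^ 2) ∧
    (∀ bs : Module.Basis (Fin 4) F K, ∃ r : F, r ≠ 0 ∧
        (Matrix.of fun i j : Fin 4 => B (bs i) (bs j)).det
          = (c ^ 2 - u * d ^ 2) * r ^ 2) := by
  obtain ⟨bE, hbE⟩ := exists_basis_one_sqrt (fun ⟨a, ha⟩ => hu ⟨a, by rw [sq, ha]⟩) hsqrtu hEgen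
  obtain ⟨bK, hbK⟩ := exists_basis_one_sqrt (fun ⟨y, hy⟩ => hns ⟨y, by rw [sq, hy]⟩) hsqrtu' hKgen
  have u_ne_zero : u ≠ 0 := fun h => hu ⟨0, by simp [h]⟩
  let _ := invertibleOfNonzero hchar
  simpa only [isUnit_iff_ne_zero] using stmt7_general u_ne_zero.isUnit hsqrtu hbE hu' hsqrtu' hbK
    (q := q) (B := B) (fun k => by rw [hq, invOf_eq_inv, one_div])
    (fun x y => by rw [hB, invOf_eq_inv, div_eq_inv_mul])
end

section
/- Let Γ be a group and let ρ: Γ → GL₂(ℂ) be a group homomorphism whose associated 2-dimensional representation is irreducible, i.e., no 1-dimensional subspace of ℂ² is invariant under ρ(γ) for all γ ∈ Γ. Then the group I(ρ) = {χ: Γ → ℂ× a homomorphism : there exists A ∈ GL₂(ℂ) with A·ρ(γ)·A⁻¹ = χ(γ)·ρ(γ) for all γ} is, under pointwise multiplication, an elementary abelian 2-group of order 1, 2, or 4; in particular every element of I(ρ) has order dividing 2 and |I(ρ)| divides 4. -/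
open Matrix

/-- `I(ρ) = {χ : Γ → ℂ^× : ρ ⊗ χ ≅ ρ}`, the set of characters `χ` of `Γ` for which
there is `A ∈ GL₂(ℂ)` with `A ρ(γ) A⁻¹ = χ(γ) ρ(γ)` for all `γ`. -/
def selfTwists {Γ : Type*} [Group Γ] (ρ : Γ →* GL (Fin 2) ℂ) : Set (Γ →* ℂˣ) :=
  {χ | ∃ A : GL (Fin 2) ℂ, ∀ γ : Γ,
    ((A * ρ γ * A⁻¹ : GL (Fin 2) ℂ) : Matrix (Fin 2) (Fin 2) ℂ)
      = (χ γ : ℂ) • ((ρ γ : GL (Fin 2) ℂ) : Matrix (Fin 2) (Fin 2) ℂ)}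

/-!
Twisting by `χ` multiplies the determinant by `χ ^ n`, so a self-twist character `χ` satisfies
`χ ^ n = 1`. If `A * ρ γ * A⁻¹ = χ γ • ρ γ`, then `A` is an eigenvector of character `χ` for the
action `M ↦ (ρ γ)⁻¹ * M * ρ γ` of `Γ` on `n × n` matrices. Eigenvectors with distinct characters are
linearly independent by Dedekind's theorem, so there are at most `n ^ 2` self-twist characters. For
`n` prime they form an `n`-group, whose order is therefore `1`, `n` or `n ^ 2`.
-/

section Dedekind

variable {R M Γ ι : Type*} [CommRing R] [IsDomain R] [AddCommGroup M] [Module R M]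
  [Module.Projective R M] [MulOneClass Γ]

theorem eq_zero_of_forall_sum_monoidHom_smul_eq_zero {χ : ι → Γ →* R}
    (hχ : Function.Injective χ) {s : Finset ι} {m : ι → M}
    (h : ∀ γ, ∑ i ∈ s, χ i γ • m i = 0) : ∀ i ∈ s, m i = 0 := by
  intro i hi
  refine (Module.forall_dual_apply_eq_zero_iff R (m i)).1 fun φ => ?_
  have dedekind := (linearIndependent_monoidHom Γ R).comp χ hχ
  refine linearIndependent_iff'.1 dedekind s (fun j => φ (m j)) (funext fun γ => ?_) i hi
  simpa [mul_comm] using congrArg φ (h γ)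

end Dedekind

section SelfTwist

variable {R E Γ : Type*} [CommRing R] [Ring E] [Algebra R E] [Monoid Γ]

variable (R) in
/-- The group `I(ρ)` of characters `χ` with `ρ ⊗ χ ≅ ρ`, for `ρ` with values in the units of an
arbitrary algebra `E` in place of matrices. The isomorphism is conjugation by a unit `A` of `E`,
written as the action of `A : ConjAct Eˣ` on `E`. -/
def selfTwistSubgroup (ρ : Γ →* Eˣ) : Subgroup (Γ →* Rˣ) where
  carrier := {χ | ∃ A : ConjAct Eˣ, ∀ γ, A • (ρ γ : E) = χ γ • (ρ γ : E)}
  one_mem' := ⟨1, fun γ => by simp⟩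
  mul_mem' := by
    rintro χ ψ ⟨A, hA⟩ ⟨B, hB⟩
    refine ⟨A * B, fun γ => ?_⟩
    rw [mul_smul, hB, smul_comm, hA, smul_smul, MonoidHom.mul_apply, mul_comm]
  inv_mem' := by
    rintro χ ⟨A, hA⟩
    refine ⟨A⁻¹, fun γ => ?_⟩
    rw [inv_smul_eq_iff, smul_comm, hA, MonoidHom.inv_apply, inv_smul_smul]

theorem mem_selfTwistSubgroup_iff {ρ : Γ →* Eˣ} {χ : Γ →* Rˣ} :
    χ ∈ selfTwistSubgroup R ρ ↔
      ∃ A : Eˣ, ∀ γ, (A * ρ γ : E) = (χ γ : R) • (ρ γ * A : E) := by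
  refine exists_congr fun A => forall_congr' fun γ => ?_
  rw [ConjAct.units_smul_def, Units.mul_inv_eq_iff_eq_mul, smul_mul_assoc, Units.smul_def]
  rfl

theorem linearIndependent_of_mul_eq_smul_mul {ι : Type*} [IsDomain R] [Module.Projective R E]
    {ρ : Γ →* Eˣ} {χ : ι → Γ →* R} (hχ : Function.Injective χ) {A : ι → E}
    (hA0 : ∀ i, A i ≠ 0) (hA : ∀ i γ, A i * ρ γ = χ i γ • (ρ γ * A i)) :
    LinearIndependent R A := by
  refine linearIndependent_iff'.2 fun s a ha i hi => ?_
  have twisted_relation (γ : Γ) : ∑ j ∈ s, χ j γ • a j • A j = 0 := by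
    apply (ρ γ).isUnit.mul_left_cancel
    calc (ρ γ : E) * ∑ j ∈ s, χ j γ • a j • A j
        = (∑ j ∈ s, a j • A j) * ρ γ := by
          simp only [Finset.mul_sum, Finset.sum_mul, smul_mul_assoc, mul_smul_comm, hA,
            smul_comm (a _)]
      _ = ρ γ * 0 := by rw [ha, zero_mul, mul_zero]
  have smul_eq_zero_at : a i • A i = 0 :=
    eq_zero_of_forall_sum_monoidHom_smul_eq_zero hχ twisted_relation i hi
  exact (smul_eq_zero.1 smul_eq_zero_at).resolve_right (hA0 i)

section Finite

variable [IsDomain R] [Module.Projective R E] [Nontrivial E] (ρ : Γ →* Eˣ)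

theorem exists_linearIndependent_selfTwistSubgroup :
    ∃ A : selfTwistSubgroup R ρ → E, LinearIndependent R A := by
  choose A hA using fun χ : selfTwistSubgroup R ρ => mem_selfTwistSubgroup_iff.1 χ.2
  have hinj : Function.Injective fun χ : selfTwistSubgroup R ρ => (Units.coeHom R).comp χ.1 :=
    fun χ ψ h => Subtype.ext (MonoidHom.ext fun γ => Units.ext (DFunLike.congr_fun h γ))
  exact ⟨_, linearIndependent_of_mul_eq_smul_mul hinj (fun χ => (A χ).ne_zero) hA⟩

variable [Module.Finite R E]

instance finite_selfTwistSubgroup : Finite (selfTwistSubgroup R ρ) :=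
  let ⟨_, hA⟩ := exists_linearIndependent_selfTwistSubgroup ρ
  hA.finite

theorem card_selfTwistSubgroup_le_finrank :
    Nat.card (selfTwistSubgroup R ρ) ≤ Module.finrank R E := by
  obtain ⟨A, hA⟩ := exists_linearIndependent_selfTwistSubgroup (R := R) ρ
  have := Fintype.ofFinite (selfTwistSubgroup R ρ)
  exact Nat.card_eq_fintype_card.trans_le hA.fintype_card_le_finrank

end Finite

end SelfTwist

section Matrix

variable {R Γ n : Type*} [CommRing R] [Monoid Γ] [Fintype n] [DecidableEq n]

theorem pow_card_eq_one_of_mem_selfTwistSubgroup {ρ : Γ →* GL n R} {χ : Γ →* Rˣ}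
    (hχ : χ ∈ selfTwistSubgroup R ρ) : χ ^ Fintype.card n = 1 := by
  obtain ⟨A, hA⟩ := mem_selfTwistSubgroup_iff.1 hχ
  have det_eq (γ : Γ) : GeneralLinearGroup.det (A * ρ γ) =
      χ γ ^ Fintype.card n * GeneralLinearGroup.det (A * ρ γ) := Units.ext <|
    calc (A.val * (ρ γ).val).det
        = (χ γ : R) ^ Fintype.card n * ((ρ γ).val * A.val).det := by rw [hA, det_smul]
      _ = (χ γ : R) ^ Fintype.card n * (A.val * (ρ γ).val).det := by rw [det_mul_comm]
  exact MonoidHom.ext fun γ => right_eq_mul.1 (det_eq γ)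

theorem isPGroup_selfTwistSubgroup (ρ : Γ →* GL n R) :
    IsPGroup (Fintype.card n) (selfTwistSubgroup R ρ) := fun χ =>
  ⟨1, Subtype.ext (by simpa using pow_card_eq_one_of_mem_selfTwistSubgroup χ.2)⟩

theorem card_selfTwistSubgroup_le_sq [IsDomain R] [Nonempty n] (ρ : Γ →* GL n R) :
    Nat.card (selfTwistSubgroup R ρ) ≤ Fintype.card n ^ 2 := by
  simpa [Module.finrank_matrix, sq] using card_selfTwistSubgroup_le_finrank (R := R) ρ

theorem stmt9_general [IsDomain R] (hn : (Fintype.card n).Prime) (ρ : Γ →* GL n R) :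
    (∀ χ ∈ selfTwistSubgroup R ρ, χ ^ Fintype.card n = 1) ∧
    Finite (selfTwistSubgroup R ρ) ∧
    (Nat.card (selfTwistSubgroup R ρ) = 1 ∨
      Nat.card (selfTwistSubgroup R ρ) = Fintype.card n ∨
      Nat.card (selfTwistSubgroup R ρ) = Fintype.card n ^ 2) := by
  have : Fact (Fintype.card n).Prime := ⟨hn⟩
  have : Nonempty n := Fintype.card_pos_iff.1 hn.pos
  refine ⟨fun χ => pow_card_eq_one_of_mem_selfTwistSubgroup, inferInstance, ?_⟩
  obtain ⟨k, hk⟩ := IsPGroup.iff_card.1 (isPGroup_selfTwistSubgroup ρ)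
  have hk2 : k ≤ 2 :=
    (Nat.pow_le_pow_iff_right hn.one_lt).1 (hk.ge.trans (card_selfTwistSubgroup_le_sq ρ))
  interval_cases k <;> simp only [hk, pow_zero, pow_one, true_or, or_true]

end Matrix

theorem coe_selfTwistSubgroup_eq_selfTwists {Γ : Type*} [Group Γ] (ρ : Γ →* GL (Fin 2) ℂ) :
    (selfTwistSubgroup ℂ ρ : Set (Γ →* ℂˣ)) = selfTwists ρ :=
  rfl

/-- for an irreducible 2-dimensional representation `ρ : Γ → GL₂(ℂ)`,
the group `I(ρ)` of characters `χ` with `ρ ⊗ χ ≅ ρ` is an elementary abelian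
2-group of order 1, 2 or 4: every element squares to the trivial character, and
`I(ρ)` is finite of cardinality 1, 2 or 4. -/
theorem stmt9 {Γ : Type*} [Group Γ] (ρ : Γ →* GL (Fin 2) ℂ)
    (hirr : ¬ ∃ v : Fin 2 → ℂ, v ≠ 0 ∧ ∀ γ : Γ, ∃ c : ℂ,
      ((ρ γ : GL (Fin 2) ℂ) : Matrix (Fin 2) (Fin 2) ℂ).mulVec v = c • v) :
    (∀ χ ∈ selfTwists ρ, ∀ γ : Γ, χ γ * χ γ = 1) ∧
    (selfTwists ρ).Finite ∧
    ((selfTwists ρ).ncard = 1 ∨ (selfTwists ρ).ncard = 2 ∨ (selfTwists ρ).ncard = 4) := by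
  obtain ⟨hsq, hfin, hcard⟩ := stmt9_general (n := Fin 2) Nat.prime_two ρ
  rw [← coe_selfTwistSubgroup_eq_selfTwists]
  exact ⟨fun χ hχ γ => by simpa [sq] using DFunLike.congr_fun (hsq χ hχ) γ, hfin, hcard⟩
end
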